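/- Let a : ℂ → ℂ be a smooth (C^∞) function with compact support contained in the upper half-plane Π, and let f, g : ℂ → ℂ be holomorphic on Π. Then ∫_Π a(z) · (f(z) + (z − conj z)·f'(z)) · conj(g(z) + (z − conj z)·g'(z)) dA(z) = ∫_Π [ a(z) − 2·∂_y((Im z)·a)(z) + Δ((Im z)²·a)(z) ] · f(z) · conj(g(z)) dA(z), where ∂_y denotes the partial derivative in the imaginary-axis direction and Δ = ∂²_x + ∂²_y is the Laplacian. -/

import Mathlib

/-!
Write `b = y a` and `c = y² a`. On the upper half-plane `z - conj z = 2 i y`, so the integrand on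
the left is `a h + 2 b ∂_y h + c Δ h` with `h = f * conj g`: indeed
`∂_y h = i f' conj g - i f conj g'`, and `Δ h = 4 f' conj g'` because `f` and `g` are holomorphic.
The right-hand integrand therefore differs from the left-hand one by the divergence
`∂_x (c_x h - c h_x) + ∂_y (c_y h - c h_y - 2 b h)`.

All the functions differentiated here are sums of products `u * p * conj q`, where `u` is a test
function on the half-plane and `p`, `q` are holomorphic there. Such a product, extended by zero, is
a compactly supported `C¹` function on `ℂ`, so its directional derivatives have integral zero
(`integral_product_deriv`); the Leibniz rule (`dirDeriv_product`) makes the divergence explicit.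
-/

open Complex MeasureTheory Metric Set ENNReal

noncomputable section

/-- The upper half-plane `Π = {z : ℂ | Im z > 0}`. -/
def UHP : Set ℂ := {z : ℂ | 0 < z.im}

/-- The (real) directional derivative of `F : ℂ → ℂ` at `z` in direction `v`. -/
def dirDeriv (v : ℂ) (F : ℂ → ℂ) (z : ℂ) : ℂ := fderiv ℝ F z v

/-- The Laplacian `Δ = ∂²_x + ∂²_y` of `F : ℂ → ℂ`. -/
def lap (F : ℂ → ℂ) (z : ℂ) : ℂ :=
  dirDeriv 1 (dirDeriv 1 F) z + dirDeriv Complex.I (dirDeriv Complex.I F) z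

/-- Test functions on the upper half-plane: smooth functions on `ℂ` whose support is compact and
contained in the half-plane. -/
structure IsTest (u : ℂ → ℂ) : Prop where
  smooth : ContDiff ℝ (⊤ : ℕ∞) u
  compact : HasCompactSupport u
  support : tsupport u ⊆ UHP

lemma isOpen_UHP : IsOpen UHP := isOpen_lt continuous_const Complex.continuous_im

lemma IsTest.dirDeriv {u : ℂ → ℂ} (hu : IsTest u) (v : ℂ) : IsTest (dirDeriv v u) where
  smooth := (hu.smooth.fderiv_right (m := (⊤ : ℕ∞)) (by simp)).clm_apply contDiff_const
  compact := hu.compact.fderiv_apply (𝕜 := ℝ) v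
  support := (tsupport_fderiv_apply_subset ℝ v).trans hu.support

lemma IsTest.mul_left {u w : ℂ → ℂ} (hu : IsTest u) (hw : ContDiff ℝ (⊤ : ℕ∞) w) :
    IsTest (fun z => w z * u z) where
  smooth := hw.mul hu.smooth
  compact := hu.compact.mul_left
  support := (tsupport_mul_subset_right (f := w) (g := u)).trans hu.support

lemma contDiff_ofReal_im : ContDiff ℝ (⊤ : ℕ∞) (fun z : ℂ => (z.im : ℂ)) :=
  Complex.ofRealCLM.contDiff.comp Complex.imCLM.contDiff

lemma integral_dirDeriv_eq_zero {F : ℂ → ℂ} (hF : ContDiff ℝ 1 F) (hc : HasCompactSupport F)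
    (v : ℂ) : Integrable (dirDeriv v F) ∧ ∫ z, dirDeriv v F z = 0 := by
  have hi : Integrable (dirDeriv v F) :=
    ((hF.continuous_fderiv one_ne_zero).clm_apply continuous_const).integrable_of_hasCompactSupport
      (hc.fderiv_apply (𝕜 := ℝ) v)
  refine ⟨hi, ?_⟩
  -- Integration by parts against the constant function `1`.
  have h := integral_mul_fderiv_eq_neg_fderiv_mul_of_integrable (𝕜 := ℂ) (μ := volume)
    (f := fun _ : ℂ => (1 : ℂ)) (g := F) (v := v) (by simp)
    (by simp only [one_mul]; exact hi)
    (by simpa using hF.continuous.integrable_of_hasCompactSupport hc)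
    (fun _ _ => differentiableAt_const _) (fun z _ => hF.differentiable one_ne_zero z)
  simpa [dirDeriv] using h

lemma dirDeriv_product {u p q : ℂ → ℂ} {z : ℂ} (hu : DifferentiableAt ℝ u z)
    (hp : DifferentiableAt ℂ p z) (hq : DifferentiableAt ℂ q z) (v : ℂ) :
    dirDeriv v (fun w => u w * p w * (starRingEnd ℂ) (q w)) z =
      dirDeriv v u z * p z * (starRingEnd ℂ) (q z)
        + u z * (v * deriv p z) * (starRingEnd ℂ) (q z)
        + u z * p z * (starRingEnd ℂ) (v * deriv q z) := by
  have h1 := hp.hasDerivAt.hasFDerivAt.restrictScalars ℝ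
  have h2 := Complex.conjCLE.hasFDerivAt.comp z (hq.hasDerivAt.hasFDerivAt.restrictScalars ℝ)
  have h3 := (hu.hasFDerivAt.mul h1).mul h2
  have h4 : fderiv ℝ (fun w => u w * p w * (starRingEnd ℂ) (q w)) z = _ := h3.fderiv
  simp only [dirDeriv, h4]
  simp
  ring

/-- The integrand is the `v`-derivative of `u * p * conj q`, written out by the Leibniz rule. -/
lemma integral_product_deriv {u p q : ℂ → ℂ} (hu : IsTest u)
    (hp : DifferentiableOn ℂ p UHP) (hq : DifferentiableOn ℂ q UHP) (v : ℂ) :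
    IntegrableOn (fun z => dirDeriv v u z * p z * (starRingEnd ℂ) (q z)
        + u z * (v * deriv p z) * (starRingEnd ℂ) (q z)
        + u z * p z * (starRingEnd ℂ) (v * deriv q z)) UHP ∧
      ∫ z in UHP, (dirDeriv v u z * p z * (starRingEnd ℂ) (q z)
        + u z * (v * deriv p z) * (starRingEnd ℂ) (q z)
        + u z * p z * (starRingEnd ℂ) (v * deriv q z)) = 0 := by
  set F : ℂ → ℂ := fun w => u w * p w * (starRingEnd ℂ) (q w) with hF
  have hsub : tsupport F ⊆ tsupport u :=
    (tsupport_mul_subset_left (f := fun w => u w * p w)).trans tsupport_mul_subset_left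
  have hFc : HasCompactSupport F := hu.compact.mul_right.mul_right
  have hF1 : ContDiff ℝ 1 F := by
    refine contDiff_iff_contDiffAt.2 fun z => ?_
    by_cases hz : z ∉ tsupport F
    · exact contDiffAt_const.congr_of_eventuallyEq (notMem_tsupport_iff_eventuallyEq.1 hz)
    rw [not_not] at hz
    have hn := isOpen_UHP.mem_nhds (hu.support (hsub hz))
    have hp1 : ContDiffAt ℝ 1 p z := (hp.analyticAt hn).contDiffAt.restrict_scalars ℝ
    have hq1 : ContDiffAt ℝ 1 q z := (hq.analyticAt hn).contDiffAt.restrict_scalars ℝ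
    exact ((hu.smooth.of_le (by simp)).contDiffAt.mul hp1).mul
      (Complex.conjCLE.contDiff.contDiffAt.comp z hq1)
  obtain ⟨hi, h0⟩ := integral_dirDeriv_eq_zero hF1 hFc v
  have heq : EqOn (dirDeriv v F) (fun z => dirDeriv v u z * p z * (starRingEnd ℂ) (q z)
        + u z * (v * deriv p z) * (starRingEnd ℂ) (q z)
        + u z * p z * (starRingEnd ℂ) (v * deriv q z)) UHP := fun z hz =>
    dirDeriv_product (hu.smooth.differentiable (by simp) z)
      (hp.differentiableAt (isOpen_UHP.mem_nhds hz))
      (hq.differentiableAt (isOpen_UHP.mem_nhds hz)) v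
  refine ⟨hi.integrableOn.congr_fun heq isOpen_UHP.measurableSet, ?_⟩
  rw [← setIntegral_congr_fun isOpen_UHP.measurableSet heq,
    setIntegral_eq_integral_of_forall_compl_eq_zero, h0]
  intro z hz
  refine image_eq_zero_of_notMem_tsupport fun h => hz ?_
  exact hu.support (hsub (tsupport_fderiv_apply_subset ℝ v h))

lemma IsTest.integrableOn_mul {u φ : ℂ → ℂ} (hu : IsTest u) (hφ : ContinuousOn φ UHP) :
    IntegrableOn (fun z => u z * φ z) UHP := by
  have hcont : Continuous (fun z => u z * φ z) := by
    refine continuous_of_tsupport fun z hz => ?_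
    have hz' := hu.support (tsupport_mul_subset_left hz)
    exact hu.smooth.continuous.continuousAt.mul (hφ.continuousAt (isOpen_UHP.mem_nhds hz'))
  exact (hcont.integrable_of_hasCompactSupport hu.compact.mul_right).integrableOn

/-- Functions on the half-plane that are integrable with integral zero. -/
def IsNull (F : ℂ → ℂ) : Prop := IntegrableOn F UHP ∧ ∫ z in UHP, F z = 0

lemma IsNull.add {F G : ℂ → ℂ} (hF : IsNull F) (hG : IsNull G) : IsNull (fun z => F z + G z) :=
  ⟨hF.1.add hG.1, by rw [integral_add hF.1 hG.1, hF.2, hG.2, add_zero]⟩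

lemma IsNull.const_mul {F : ℂ → ℂ} (hF : IsNull F) (k : ℂ) : IsNull (fun z => k * F z) :=
  ⟨hF.1.const_mul k, by rw [integral_const_mul, hF.2, mul_zero]⟩

/-- The case `j = 1` of the relation `⟨a S_Π f, S_Π g⟩ = ⟨(K_(1) a) f, g⟩`:
`∫_Π a (f + (z-conj z)f') conj(g + (z-conj z)g') dA
  = ∫_Π [a - 2 ∂_y(y a) + Δ(y² a)] f conj g dA`. -/
theorem toeplitz_reduction_j_one
    (a f g : ℂ → ℂ) (ha : ContDiff ℝ (⊤ : ℕ∞) a) (hsupp : HasCompactSupport a)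
    (hsub : tsupport a ⊆ UHP)
    (hf : DifferentiableOn ℂ f UHP) (hg : DifferentiableOn ℂ g UHP) :
    ∫ z in UHP,
        a z * (f z + (z - (starRingEnd ℂ) z) * deriv f z)
          * (starRingEnd ℂ) (g z + (z - (starRingEnd ℂ) z) * deriv g z)
      = ∫ z in UHP,
          (a z - 2 * dirDeriv Complex.I (fun w => (w.im : ℂ) * a w) z
              + lap (fun w => ((w.im : ℝ) : ℂ) ^ 2 * a w) z)
            * f z * (starRingEnd ℂ) (g z) := by
  have hta : IsTest a := ⟨ha, hsupp, hsub⟩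
  have htb := hta.mul_left contDiff_ofReal_im
  have htc := hta.mul_left (contDiff_ofReal_im.pow 2)
  have hf' := hf.deriv isOpen_UHP
  have hg' := hg.deriv isOpen_UHP
  -- The null function below is the divergence of
  -- `(c_x h - c h_x, c_y h - c h_y - 2 b h)`, where `h_x = f' conj g + f conj g'`
  -- and `h_y = i f' conj g - i f conj g'`.
  have hx1 : IsNull _ := integral_product_deriv (htc.dirDeriv 1) hf hg 1
  have hx2 : IsNull _ := integral_product_deriv htc hf' hg 1
  have hx3 : IsNull _ := integral_product_deriv htc hf hg' 1
  have hy1 : IsNull _ := integral_product_deriv (htc.dirDeriv I) hf hg I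
  have hy2 : IsNull _ := integral_product_deriv htc hf' hg I
  have hy3 : IsNull _ := integral_product_deriv htc hf hg' I
  have hy4 : IsNull _ := integral_product_deriv htb hf hg I
  obtain ⟨hDi, hD0⟩ := (((((hx1.add (hx2.const_mul (-1))).add (hx3.const_mul (-1))).add hy1).add
    (hy2.const_mul (-I))).add (hy3.const_mul I)).add (hy4.const_mul (-2))
  have hL : IntegrableOn (fun z => a z * (f z + (z - (starRingEnd ℂ) z) * deriv f z)
      * (starRingEnd ℂ) (g z + (z - (starRingEnd ℂ) z) * deriv g z)) UHP := by
    have hw : ContinuousOn (fun z : ℂ => z - (starRingEnd ℂ) z) UHP :=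
      (continuous_id.sub Complex.continuous_conj).continuousOn
    have := hta.integrableOn_mul ((hf.continuousOn.add (hw.mul hf'.continuousOn)).mul
      (Complex.continuous_conj.comp_continuousOn
        (hg.continuousOn.add (hw.mul hg'.continuousOn))))
    simpa only [mul_assoc, Pi.mul_apply, Pi.add_apply, Function.comp_def] using this
  rw [← add_zero (∫ z in UHP, a z * _ * _), ← hD0, ← integral_add hL hDi]
  refine setIntegral_congr_fun isOpen_UHP.measurableSet fun z _ => ?_
  have hz : z - (starRingEnd ℂ) z = 2 * (z.im : ℂ) * I := by
    rw [Complex.sub_conj]; push_cast; ring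
  simp only [hz, lap, map_add, map_mul, Complex.conj_ofReal, Complex.conj_I, map_ofNat, map_one]
  ring_nf
  simp only [Complex.I_sq]
  ring
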